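/- Let k be a field of characteristic 0 and (C, d, {m_n}_{n≥2}) an A∞-algebra over k. Define ℓ_n(c₁,…,c_n) := Σ_{σ∈S_n} sgn(σ)(−1)^{ε(σ)} m_n(c_{σ^{−1}(1)},…,c_{σ^{−1}(n)}), where (−1)^{ε(σ)} is the Koszul sign of the permutation σ acting on the homogeneous elements c₁,…,c_n. Then (C, d, {ℓ_n}_{n≥2}) is an L∞-algebra (the antisymmetrization of the A∞-structure). -/

import Mathlib

/-!
The operations `ℓ_n` are defined on all of `C` by splitting each argument into its even and odd
part, since the graded sign `sgn(σ) (-1)^{ε(σ)}` (`gSign`) depends only on parities. That sign is a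
cocycle (`gSign_mul`), which gives graded antisymmetry at once.

For the Jacobi identity, expand `ℓ_{t+1}(ℓ_q(…), …)` for an unshuffle `σ` of `n = q + t` inputs. The
inner bracket is a sum over `α ∈ S_q`; the outer one is a sum over `S_{t+1}`, that is, over the
position `r` of the inner value and the order `γ ∈ S_t` of the other inputs (`sum_insertZero`).
Every permutation of the inputs is uniquely `σ ∘ (α ⊕ γ)` (`sum_unshuffle`), so for fixed `q` and `r`
the sum runs over all of `S_n`. Reindexing by the permutation moving the block of `q` inputs past the
`r` inputs in front of it turns each summand into the `(r, q)` summand of the Stasheff relation on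
the permuted inputs (`nested_term`). In the sign, the block permutation contributes
`(-1)^{qr + BR}`, with `B` and `R` the total degrees of the block and of these `r` inputs, and moving
`m_q` of the block, of degree `B + q - 2`, past them contributes `(-1)^{r + (B + q) R}`; with the
Jacobi sign `(-1)^{q t}` this leaves the Stasheff sign `(-1)^{r + q (t - r) + q R}`
(`sign_identity`). Hence the Jacobi sum is the sum over `ρ ∈ S_n` of `gSign δ ρ` times the Stasheff
relation for the inputs reordered by `ρ`, and vanishes.
-/

open scoped TensorProduct BigOperators

/-- The Koszul sign `(-1)^{ε(σ)}` of a permutation `σ` acting on homogeneous elements of degrees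
`δ 0, …, δ (n-1)`, i.e. reordering `x_0, …, x_{n-1}` into `x_{σ 0}, …, x_{σ (n-1)}`. -/
def koszulSign {n : ℕ} (δ : Fin n → ℤ) (σ : Equiv.Perm (Fin n)) : ℤˣ :=
  ∏ p ∈ Finset.univ.filter (fun p : Fin n × Fin n => p.1 < p.2 ∧ σ p.2 < σ p.1),
    (-1 : ℤˣ) ^ (δ (σ p.1) * δ (σ p.2))

/-- A `(q, n-q)`-unshuffle: a permutation of `{0, …, n-1}` that is strictly increasing on
`{0, …, q-1}` and on `{q, …, n-1}`. -/
def IsUnshuffle {n : ℕ} (q : ℕ) (σ : Equiv.Perm (Fin n)) : Prop :=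
  (∀ i j : Fin n, (i : ℕ) < (j : ℕ) → (j : ℕ) < q → σ i < σ j) ∧
  (∀ i j : Fin n, q ≤ (i : ℕ) → (i : ℕ) < (j : ℕ) → σ i < σ j)

instance {n : ℕ} (q : ℕ) (σ : Equiv.Perm (Fin n)) : Decidable (IsUnshuffle q σ) := by
  unfold IsUnshuffle; infer_instance

/-- An L∞-algebra over `k`: a ℤ-graded chain complex `(V, d)` with graded antisymmetric
operations `ℓ_n` (`= op n`) of degree `n - 2` for `n ≥ 2` (and `ℓ₁ = d`), satisfying the
generalized Jacobi identities. -/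
structure LInftyStr (k V : Type*) [Field k] [AddCommGroup V] [Module k V] where
  /-- the ℤ-grading on the underlying chain complex -/
  grading : ℤ → Submodule k V
  internal : DirectSum.IsInternal grading
  /-- the differential -/
  d : V →ₗ[k] V
  d_degree : ∀ (i : ℤ) (x : V), x ∈ grading i → d x ∈ grading (i - 1)
  d_sq : ∀ x : V, d (d x) = 0
  /-- the operations `ℓ_n`, as multilinear maps; `op 1 = d` and `op n = ℓ_n` for `n ≥ 2` -/
  op : (n : ℕ) → MultilinearMap k (fun _ : Fin n => V) V
  op_one : ∀ x : Fin 1 → V, op 1 x = d (x 0)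
  op_degree : ∀ (n : ℕ), 2 ≤ n → ∀ (δ : Fin n → ℤ) (x : Fin n → V),
      (∀ i, x i ∈ grading (δ i)) → op n x ∈ grading ((∑ i, δ i) + n - 2)
  /-- graded antisymmetry: `ℓ_n (x_{σ 0}, …) = sgn(σ) (-1)^{ε(σ)} ℓ_n (x_0, …)` -/
  antisymm : ∀ (n : ℕ), 2 ≤ n → ∀ (δ : Fin n → ℤ) (x : Fin n → V),
      (∀ i, x i ∈ grading (δ i)) → ∀ σ : Equiv.Perm (Fin n),
      op n (fun i => x (σ i)) = (Equiv.Perm.sign σ * koszulSign δ σ) • op n x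
  /-- generalized Jacobi identities: for `n ≥ 1`, summing over `q = q' + 1 ∈ {1, …, n}`,
  `p = n + 1 - q`, and the `(q, n-q)`-unshuffles `σ`,
  `∑ (-1)^{q(p-1)} sgn(σ) (-1)^{ε(σ)} ℓ_p (ℓ_q (x_{σ 0}, …, x_{σ (q-1)}), x_{σ q}, …) = 0`. -/
  jacobi : ∀ (n : ℕ), 1 ≤ n → ∀ (δ : Fin n → ℤ) (x : Fin n → V),
      (∀ i, x i ∈ grading (δ i)) →
      ∑ q' : Fin n, ∑ σ ∈ Finset.univ.filter
          (fun σ : Equiv.Perm (Fin n) => IsUnshuffle ((q' : ℕ) + 1) σ),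
        (((-1 : ℤˣ) ^ (((q' : ℕ) + 1) * (n - ((q' : ℕ) + 1))) *
            Equiv.Perm.sign σ * koszulSign δ σ)) •
          op (n - ((q' : ℕ) + 1) + 1)
            (Fin.cases
              (op ((q' : ℕ) + 1) (fun i => x (σ (Fin.castLE q'.isLt i))))
              (fun j => x (σ (Fin.cast (Nat.add_sub_cancel' q'.isLt)
                (Fin.natAdd ((q' : ℕ) + 1) j)))))
        = 0

/-- Extend a function on `Fin n` by zero to all of `ℕ`. -/
def extendByZero {n : ℕ} {α : Type*} [Zero α] (x : Fin n → α) (m : ℕ) : α :=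
  if h : m < n then x ⟨m, h⟩ else 0

/-- An A∞-algebra over `k`: a ℤ-graded chain complex `(C, d)` with operations `m_n` of degree
`n - 2` for `n ≥ 2` (and `m₁ = d`), satisfying the Stasheff relations (with the Koszul sign
rule). -/
structure AInftyStr (k C : Type*) [Field k] [AddCommGroup C] [Module k C] where
  grading : ℤ → Submodule k C
  internal : DirectSum.IsInternal grading
  d : C →ₗ[k] C
  d_degree : ∀ (i : ℤ) (x : C), x ∈ grading i → d x ∈ grading (i - 1)
  d_sq : ∀ x : C, d (d x) = 0
  /-- the operations `m_n`, as multilinear maps; `op 1 = d` and `op n = m_n` for `n ≥ 2` -/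
  op : (n : ℕ) → MultilinearMap k (fun _ : Fin n => C) C
  op_one : ∀ x : Fin 1 → C, op 1 x = d (x 0)
  op_degree : ∀ (n : ℕ), 2 ≤ n → ∀ (δ : Fin n → ℤ) (x : Fin n → C),
      (∀ i, x i ∈ grading (δ i)) → op n x ∈ grading ((∑ i, δ i) + n - 2)
  /-- the Stasheff relations: for every `n ≥ 1` and homogeneous `x i` of degree `δ i`,
  `∑_{r+q+t=n, q ≥ 1} (-1)^{r+qt} m_{r+1+t} ∘ (id^{⊗r} ⊗ m_q ⊗ id^{⊗t}) = 0`, evaluated on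
  `x₀ ⊗ ⋯ ⊗ x_{n-1}` with the Koszul sign `(-1)^{(q-2)(δ₀+⋯+δ_{r-1})}` coming from moving
  `m_q` (of degree `q-2`) past the first `r` elements. -/
  stasheff : ∀ (n : ℕ), 1 ≤ n → ∀ (δ : Fin n → ℤ) (x : Fin n → C),
      (∀ i, x i ∈ grading (δ i)) →
      ∑ r ∈ Finset.range (n + 1), ∑ q ∈ Finset.Icc 1 (n - r),
        (((-1 : ℤˣ) ^ (r + q * (n - r - q))) *
            ((-1 : ℤˣ) ^ (((q : ℤ) - 2) * ∑ m ∈ Finset.range r, extendByZero δ m))) •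
          op (r + 1 + (n - r - q)) (fun j =>
            if (j : ℕ) < r then extendByZero x (j : ℕ)
            else if (j : ℕ) = r then
              op q (fun i => extendByZero x (r + (i : ℕ)))
            else extendByZero x (q + (j : ℕ) - 1))
        = 0


/-! ### The graded sign of a permutation -/

/-- The graded sign `sgn(σ) (-1)^{ε(σ)}`: a factor `(-1)^{1 + |x_a| |x_b|}` for every pair of
elements whose order is inverted by `σ`. -/
def gSign {n : ℕ} (δ : Fin n → ℤ) (σ : Equiv.Perm (Fin n)) : ℤˣ :=
  ∏ i, ∏ j, if i < j ∧ σ j < σ i then (-1 : ℤˣ) ^ (1 + δ (σ i) * δ (σ j)) else 1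

/-- `gSign` is the sign in the statements of antisymmetry and of the Jacobi identities. -/
lemma sign_mul_koszulSign {n : ℕ} (δ : Fin n → ℤ) (σ : Equiv.Perm (Fin n)) :
    Equiv.Perm.sign σ * koszulSign δ σ = gSign δ σ := by
  have h1 : Equiv.Perm.sign σ = ∏ i, ∏ j, if i < j ∧ σ j < σ i then (-1 : ℤˣ) else 1 := by
    rw [Equiv.Perm.sign_eq_prod_prod_Ioi]
    refine Finset.prod_congr rfl fun i _ => ?_
    have : Finset.Ioi i = Finset.univ.filter (fun j => i < j) := by ext; simp
    rw [this, Finset.prod_filter]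
    refine Finset.prod_congr rfl fun j _ => ?_
    by_cases hij : i < j
    · rcases lt_trichotomy (σ i) (σ j) with h | h | h
      · simp [hij, h, h.not_gt]
      · exact absurd (σ.injective h) hij.ne
      · simp [hij, h, h.not_gt]
    · simp [hij]
  rw [h1, koszulSign, Finset.prod_filter, Fintype.prod_prod_type, gSign,
    ← Finset.prod_mul_distrib]
  refine Finset.prod_congr rfl fun i _ => ?_
  rw [← Finset.prod_mul_distrib]
  refine Finset.prod_congr rfl fun j _ => ?_
  split_ifs <;> simp [zpow_add]

/-- A product over unordered pairs is invariant under relabelling the indices. -/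
lemma prod_lt_comp_perm {n : ℕ} {M : Type*} [CommMonoid M] (G : Fin n → Fin n → M)
    (hG : ∀ i j, G i j = G j i) (τ : Equiv.Perm (Fin n)) :
    (∏ i, ∏ j, if i < j then G (τ i) (τ j) else 1) = ∏ i, ∏ j, if i < j then G i j else 1 := by
  simp only [← Fintype.prod_prod_type' (f := fun i j => if i < j then G (τ i) (τ j) else 1),
    ← Fintype.prod_prod_type' (f := fun i j => if i < j then G i j else 1)]
  rw [← Finset.prod_filter, ← Finset.prod_filter]
  refine Finset.prod_nbij'
    (fun p => if τ p.1 < τ p.2 then (τ p.1, τ p.2) else (τ p.2, τ p.1))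
    (fun p => if τ⁻¹ p.1 < τ⁻¹ p.2 then (τ⁻¹ p.1, τ⁻¹ p.2) else (τ⁻¹ p.2, τ⁻¹ p.1))
    ?_ ?_ ?_ ?_ ?_
  · rintro ⟨i, j⟩ h
    have h : i < j := by simpa using h
    have h2 : τ i ≠ τ j := fun e => h.ne (τ.injective e)
    dsimp only
    split_ifs with h3
    · simpa using h3
    · simpa using lt_of_le_of_ne (not_lt.1 h3) h2.symm
  · rintro ⟨i, j⟩ h
    have h : i < j := by simpa using h
    have h2 : τ⁻¹ i ≠ τ⁻¹ j := fun e => h.ne (τ⁻¹.injective e)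
    dsimp only
    split_ifs with h3
    · simpa using h3
    · simpa using lt_of_le_of_ne (not_lt.1 h3) h2.symm
  · rintro ⟨i, j⟩ h
    have h : i < j := by simpa using h
    dsimp only
    split_ifs <;> simp_all [h.not_gt]
  · rintro ⟨i, j⟩ h
    have h : i < j := by simpa using h
    dsimp only
    split_ifs <;> simp_all [h.not_gt]
  · rintro ⟨i, j⟩ h
    dsimp only
    split_ifs
    · rfl
    · exact hG _ _

lemma negOne_zpow_sum {ι : Type*} (s : Finset ι) (f : ι → ℤ) :
    (-1 : ℤˣ) ^ (∑ i ∈ s, f i) = ∏ i ∈ s, (-1 : ℤˣ) ^ f i := by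
  classical
  induction s using Finset.induction_on with
  | empty => simp
  | insert a s ha ih => rw [Finset.sum_insert ha, Finset.prod_insert ha, zpow_add, ih]

/-- The graded sign is a cocycle. -/
lemma gSign_mul {n : ℕ} (δ : Fin n → ℤ) (σ τ : Equiv.Perm (Fin n)) :
    gSign δ (σ * τ) = gSign δ σ * gSign (fun i => δ (σ i)) τ := by
  have key := prod_lt_comp_perm
    (fun i j => if (i < j ∧ σ j < σ i) ∨ (j < i ∧ σ i < σ j) then
      (-1 : ℤˣ) ^ (1 + δ (σ i) * δ (σ j)) else 1)
    (fun i j => by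
      rw [mul_comm (δ (σ i))]
      exact if_congr or_comm rfl rfl) τ
  have h1 : gSign δ σ = ∏ i, ∏ j, if i < j then
      (if (i < j ∧ σ j < σ i) ∨ (j < i ∧ σ i < σ j) then
      (-1 : ℤˣ) ^ (1 + δ (σ i) * δ (σ j)) else 1) else 1 := by
    refine Finset.prod_congr rfl fun i _ => Finset.prod_congr rfl fun j _ => ?_
    by_cases hij : i < j
    · simp [hij, hij.not_gt]
    · simp [hij]
  rw [h1, ← key, gSign, gSign, ← Finset.prod_mul_distrib]
  refine Finset.prod_congr rfl fun i _ => ?_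
  rw [← Finset.prod_mul_distrib]
  refine Finset.prod_congr rfl fun j _ => ?_
  by_cases hij : i < j
  · have h2 : τ i ≠ τ j := fun e => hij.ne (τ.injective e)
    have h3 : σ (τ i) ≠ σ (τ j) := fun e => h2 (σ.injective e)
    rcases lt_or_gt_of_ne h2 with h | h <;> rcases lt_or_gt_of_ne h3 with h' | h' <;>
      simp [hij, h, h.not_gt, h', h'.not_gt]
  · simp [hij]

lemma negOne_zpow_congr {a b : ℤ} (h : (a : ZMod 2) = b) : (-1 : ℤˣ) ^ a = (-1 : ℤˣ) ^ b := by
  obtain ⟨c, hc⟩ := (ZMod.intCast_eq_intCast_iff_dvd_sub a b 2).1 h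
  obtain rfl : b = a + 2 * c := by push_cast at hc; omega
  rw [zpow_add, zpow_mul]
  simp

/-- The graded sign depends only on the parities of the degrees. -/
lemma gSign_congr {n : ℕ} {δ δ' : Fin n → ℤ} (h : ∀ i, (δ i : ZMod 2) = δ' i)
    (σ : Equiv.Perm (Fin n)) : gSign δ σ = gSign δ' σ := by
  refine Finset.prod_congr rfl fun i _ => Finset.prod_congr rfl fun j _ => ?_
  congr 1
  apply negOne_zpow_congr
  push_cast
  rw [h, h]

/-- The graded sign as a product over pairs of values rather than pairs of positions. -/
lemma gSign_reindex {n : ℕ} (δ : Fin n → ℤ) (σ : Equiv.Perm (Fin n)) :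
    gSign δ σ = ∏ u, ∏ v, if σ⁻¹ u < σ⁻¹ v ∧ v < u then (-1 : ℤˣ) ^ (1 + δ u * δ v) else 1 := by
  rw [gSign, ← Equiv.prod_comp σ (fun u => ∏ v, if σ⁻¹ u < σ⁻¹ v ∧ v < u then _ else _)]
  refine Finset.prod_congr rfl fun i _ => ?_
  rw [← Equiv.prod_comp σ (fun v => if σ⁻¹ (σ i) < σ⁻¹ v ∧ v < σ i then _ else _)]
  simp

/-- The permutation of `Fin (q + t)` acting by `α` on the first `q` and by `γ` on the last `t`
indices. -/
def blockSum {q t : ℕ} (α : Equiv.Perm (Fin q)) (γ : Equiv.Perm (Fin t)) :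
    Equiv.Perm (Fin (q + t)) :=
  finSumFinEquiv.permCongr (Equiv.Perm.sumCongr α γ)

@[simp] lemma blockSum_castAdd {q t : ℕ} (α : Equiv.Perm (Fin q)) (γ : Equiv.Perm (Fin t))
    (i : Fin q) : blockSum α γ (Fin.castAdd t i) = Fin.castAdd t (α i) := by
  simp [blockSum, Equiv.permCongr_apply]

@[simp] lemma blockSum_natAdd {q t : ℕ} (α : Equiv.Perm (Fin q)) (γ : Equiv.Perm (Fin t))
    (i : Fin t) : blockSum α γ (Fin.natAdd q i) = Fin.natAdd q (γ i) := by
  simp [blockSum, Equiv.permCongr_apply]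

lemma gSign_blockSum {q t : ℕ} (δ : Fin (q + t) → ℤ) (α : Equiv.Perm (Fin q))
    (γ : Equiv.Perm (Fin t)) :
    gSign δ (blockSum α γ) =
      gSign (fun i => δ (Fin.castAdd t i)) α * gSign (fun i => δ (Fin.natAdd q i)) γ := by
  have h1 : ∀ (a : Fin q) (b : Fin t), ¬ Fin.natAdd q b < Fin.castAdd t a := by
    intro a b; simp [Fin.lt_def]; omega
  have h2 : ∀ a b : Fin q, Fin.castAdd t a < Fin.castAdd t b ↔ a < b := fun _ _ => Iff.rfl
  simp only [gSign, Fin.prod_univ_add, blockSum_castAdd, blockSum_natAdd]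
  simp [h1, h2]

/-- The permutation of `Fin (q + t)` whose arrangement `i ↦ blockMove q r i` lists the indices
`q, …, q + r - 1`, then `0, …, q - 1`, then `q + r, …, q + t - 1`. -/
def blockMove (q : ℕ) {t : ℕ} (r : ℕ) (hr : r ≤ t) : Equiv.Perm (Fin (q + t)) where
  toFun i := ⟨if (i : ℕ) < r then q + i else if (i : ℕ) < r + q then i - r else i, by
    have := i.isLt; split_ifs <;> omega⟩
  invFun i := ⟨if (i : ℕ) < q then i + r else if (i : ℕ) < q + r then i - q else i, by
    have := i.isLt; split_ifs <;> omega⟩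
  left_inv i := by
    ext; dsimp only; split_ifs <;> omega
  right_inv i := by
    ext; dsimp only; split_ifs <;> omega

lemma blockMove_val (q : ℕ) {t : ℕ} (r : ℕ) (hr : r ≤ t) (i : Fin (q + t)) :
    (blockMove q r hr i : ℕ) =
      if (i : ℕ) < r then q + i else if (i : ℕ) < r + q then i - r else i := rfl

lemma blockMove_inv_val (q : ℕ) {t : ℕ} (r : ℕ) (hr : r ≤ t) (i : Fin (q + t)) :
    ((blockMove q r hr)⁻¹ i : ℕ) =
      if (i : ℕ) < q then i + r else if (i : ℕ) < q + r then i - q else i := rfl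

lemma gSign_blockMove {q t r : ℕ} (hr : r ≤ t) (δ : Fin (q + t) → ℤ) :
    gSign δ (blockMove q r hr) = ∏ u : Fin t, if (u : ℕ) < r then
      (-1 : ℤˣ) ^ (q + δ (Fin.natAdd q u) * ∑ v : Fin q, δ (Fin.castAdd t v)) else 1 := by
  rw [gSign_reindex]
  simp only [Fin.prod_univ_add]
  have h1 : ∀ a b : Fin q, ¬ ((blockMove q r hr)⁻¹ (Fin.castAdd t a) <
      (blockMove q r hr)⁻¹ (Fin.castAdd t b) ∧ Fin.castAdd t b < Fin.castAdd t a) := by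
    intro a b
    simp only [Fin.lt_def, blockMove_inv_val, Fin.val_castAdd]
    split_ifs <;> omega
  have h2 : ∀ (a : Fin q) (b : Fin t), ¬ Fin.natAdd q b < Fin.castAdd t a := by
    intro a b; simp [Fin.lt_def]; omega
  have h3 : ∀ a b : Fin t, ¬ ((blockMove q r hr)⁻¹ (Fin.natAdd q a) <
      (blockMove q r hr)⁻¹ (Fin.natAdd q b) ∧ Fin.natAdd q b < Fin.natAdd q a) := by
    intro a b
    simp only [Fin.lt_def, blockMove_inv_val, Fin.val_natAdd]
    split_ifs <;> omega
  have h4 : ∀ (a : Fin t) (b : Fin q), ((blockMove q r hr)⁻¹ (Fin.natAdd q a) <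
      (blockMove q r hr)⁻¹ (Fin.castAdd t b) ∧ Fin.castAdd t b < Fin.natAdd q a) ↔
        (a : ℕ) < r := by
    intro a b
    have := a.isLt
    have := b.isLt
    simp only [Fin.lt_def, blockMove_inv_val, Fin.val_natAdd, Fin.val_castAdd]
    split_ifs <;> omega
  simp only [h1, h2, h3, h4, and_false, if_false, Finset.prod_const_one, one_mul, mul_one]
  refine Finset.prod_congr rfl fun u _ => ?_
  split_ifs with h
  · rw [← negOne_zpow_sum, Finset.sum_add_distrib, Finset.mul_sum]
    simp
  · simp

/-! ### Decompositions of permutations -/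

/-- The permutation of `Fin (t + 1)` whose arrangement places `0` in position `r` and
`γ 0 + 1, …, γ (t - 1) + 1`, in this order, in the other positions. -/
def insertZero {t : ℕ} (r : Fin (t + 1)) (γ : Equiv.Perm (Fin t)) : Equiv.Perm (Fin (t + 1)) :=
  (finSuccEquiv' r).trans ((Equiv.optionCongr γ).trans (finSuccEquiv' 0).symm)

@[simp] lemma insertZero_self {t : ℕ} (r : Fin (t + 1)) (γ : Equiv.Perm (Fin t)) :
    insertZero r γ r = 0 := by
  simp [insertZero]

@[simp] lemma insertZero_succAbove {t : ℕ} (r : Fin (t + 1)) (γ : Equiv.Perm (Fin t))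
    (j : Fin t) : insertZero r γ (r.succAbove j) = (γ j).succ := by
  simp [insertZero]

/-- Every permutation of `Fin (t + 1)` is uniquely of the form `insertZero r γ`. -/
lemma sum_insertZero {t : ℕ} {A : Type*} [AddCommMonoid A] (f : Equiv.Perm (Fin (t + 1)) → A) :
    ∑ β, f β = ∑ r, ∑ γ, f (insertZero r γ) := by
  have hinj : Function.Injective
      (fun p : Fin (t + 1) × Equiv.Perm (Fin t) => insertZero p.1 p.2) := by
    rintro ⟨r, γ⟩ ⟨r', γ'⟩ h
    dsimp only at h
    have h1 : r = r' := by
      apply (insertZero r γ).injective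
      rw [insertZero_self, h, insertZero_self]
    subst h1
    have h2 : γ = γ' := by
      ext1 j
      have := congrArg (fun e => e (r.succAbove j)) h
      simpa using this
    rw [h2]
  have hbij := (Fintype.bijective_iff_injective_and_card _).2 ⟨hinj, by
    simp [Fintype.card_perm, Nat.factorial_succ]⟩
  rw [← Fintype.sum_prod_type' (f := fun r γ => f (insertZero r γ))]
  exact (Function.Bijective.sum_comp hbij f).symm

lemma gSign_insertZero {t : ℕ} (η : Fin (t + 1) → ℤ) (r : Fin (t + 1))
    (γ : Equiv.Perm (Fin t)) :
    gSign η (insertZero r γ) =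
      (∏ u : Fin t, if (u : ℕ) < r then (-1 : ℤˣ) ^ (1 + η (γ u).succ * η 0) else 1) *
        gSign (fun i => η i.succ) γ := by
  have h1 : ∀ u : Fin t, r.succAbove u < r ↔ (u : ℕ) < r := by
    intro u
    rw [Fin.succAbove_lt_iff_castSucc_lt, Fin.lt_def, Fin.val_castSucc]
  simp only [gSign, Fin.prod_univ_succAbove _ r, insertZero_self, insertZero_succAbove]
  simp only [lt_irrefl, Fin.not_lt_zero, and_false, if_false, one_mul, h1,
    Fin.succ_pos, and_true, Fin.succ_lt_succ_iff, Fin.succAbove_lt_succAbove_iff,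
    Finset.prod_mul_distrib, Finset.prod_const_one]

lemma isUnshuffle_iff {q t : ℕ} (σ : Equiv.Perm (Fin (q + t))) :
    IsUnshuffle q σ ↔ StrictMono (fun i : Fin q => σ (Fin.castAdd t i)) ∧
      StrictMono (fun i : Fin t => σ (Fin.natAdd q i)) := by
  constructor
  · rintro ⟨h1, h2⟩
    refine ⟨fun i j hij => h1 _ _ hij (by simp), fun i j hij => h2 _ _ (by simp) (by simpa)⟩
  · rintro ⟨h1, h2⟩
    constructor
    · intro i j hij hj
      exact h1 (a := ⟨i, by omega⟩) (b := ⟨j, hj⟩) hij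
    · intro i j hi hij
      have := h2 (a := ⟨i - q, by omega⟩) (b := ⟨j - q, by omega⟩)
        (by simp only [Fin.lt_def]; omega)
      have e1 : Fin.natAdd q ⟨i - q, by omega⟩ = i := Fin.ext (by simp; omega)
      have e2 : Fin.natAdd q ⟨j - q, by omega⟩ = j := Fin.ext (by simp; omega)
      simpa only [e1, e2] using this

/-- Every permutation is uniquely an unshuffle composed with permutations of the two blocks. -/
lemma sum_unshuffle {q t : ℕ} {A : Type*} [AddCommMonoid A]
    (f : Equiv.Perm (Fin (q + t)) → A) :
    ∑ σ ∈ Finset.univ.filter (fun σ : Equiv.Perm (Fin (q + t)) => IsUnshuffle q σ),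
      ∑ α, ∑ γ, f (σ * blockSum α γ) = ∑ ρ, f ρ := by
  simp only [← Fintype.sum_prod_type' (f := fun α γ => f (_ * blockSum α γ))]
  rw [← Finset.sum_product' _ _ (fun σ (p : Equiv.Perm (Fin q) × Equiv.Perm (Fin t)) =>
    f (σ * blockSum p.1 p.2))]
  refine Finset.sum_bij (fun p _ => p.1 * blockSum p.2.1 p.2.2) (fun _ _ => Finset.mem_univ _)
    ?_ ?_ (fun _ _ => rfl)
  · rintro ⟨σ, α, γ⟩ h ⟨σ', α', γ'⟩ h' e
    simp only [Finset.mem_product, Finset.mem_filter, Finset.mem_univ, true_and, and_true,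
      isUnshuffle_iff] at h h'
    dsimp only at e
    have e1 : ∀ i, σ (Fin.castAdd t (α i)) = σ' (Fin.castAdd t (α' i)) := fun i => by
      simpa using congrArg (fun ρ => ρ (Fin.castAdd t i)) e
    have e2 : ∀ i, σ (Fin.natAdd q (γ i)) = σ' (Fin.natAdd q (γ' i)) := fun i => by
      simpa using congrArg (fun ρ => ρ (Fin.natAdd q i)) e
    have f1 := (h.1.range_inj h'.1).1 (by
      rw [← α.surjective.range_comp, ← α'.surjective.range_comp (fun i => σ' (Fin.castAdd t i))]
      congr 1; funext i; exact e1 i)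
    have f2 := (h.2.range_inj h'.2).1 (by
      rw [← γ.surjective.range_comp, ← γ'.surjective.range_comp (fun i => σ' (Fin.natAdd q i))]
      congr 1; funext i; exact e2 i)
    have hσ : σ = σ' := by
      ext1 i
      refine Fin.addCases (fun i => congrFun f1 i) (fun i => congrFun f2 i) i
    subst hσ
    have hα : α = α' := by
      ext1 i
      simpa using e1 i
    have hγ : γ = γ' := by
      ext1 i
      simpa using e2 i
    rw [hα, hγ]
  · intro ρ _
    -- sorting the values of `ρ` on each block yields the unshuffle
    set α := Tuple.sort (fun i : Fin q => ρ (Fin.castAdd t i)) with hα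
    set γ := Tuple.sort (fun i : Fin t => ρ (Fin.natAdd q i)) with hγ
    refine ⟨(ρ * blockSum α γ, α⁻¹, γ⁻¹), ?_, ?_⟩
    · simp only [Finset.mem_product, Finset.mem_filter, Finset.mem_univ, true_and, and_true,
        isUnshuffle_iff]
      constructor
      · have := (Tuple.monotone_sort (fun i : Fin q => ρ (Fin.castAdd t i))).strictMono_of_injective
          ((ρ.injective.comp (Fin.castAdd_injective q t)).comp α.injective)
        intro i j hij
        simpa using this hij
      · have := (Tuple.monotone_sort (fun i : Fin t => ρ (Fin.natAdd q i))).strictMono_of_injective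
          ((ρ.injective.comp (Fin.natAdd_injective t q)).comp γ.injective)
        intro i j hij
        simpa using this hij
    · ext1 i
      refine Fin.addCases (fun i => ?_) (fun i => ?_) i <;> simp

/-! ### The antisymmetrized operations -/

namespace AInftyStr

variable {k C : Type*} [Field k] [AddCommGroup C] [Module k C] (𝒞 : AInftyStr k C)

/-- The projection of `C` onto the sum of its homogeneous components of parity `e`. -/
noncomputable def parityProj (e : ZMod 2) : C →ₗ[k] C :=
  (DirectSum.toModule k ℤ C fun i => if (i : ZMod 2) = e then (𝒞.grading i).subtype else 0) ∘ₗ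
    (LinearEquiv.ofBijective (DirectSum.coeLinearMap 𝒞.grading) 𝒞.internal).symm.toLinearMap

lemma parityProj_of_mem (e : ZMod 2) {i : ℤ} {x : C} (hx : x ∈ 𝒞.grading i) :
    𝒞.parityProj e x = if (i : ZMod 2) = e then x else 0 := by
  have h : (LinearEquiv.ofBijective (DirectSum.coeLinearMap 𝒞.grading) 𝒞.internal).symm x =
      DirectSum.lof k ℤ (fun i => 𝒞.grading i) i ⟨x, hx⟩ := by
    rw [LinearEquiv.symm_apply_eq]
    exact (DirectSum.coeLinearMap_lof 𝒞.grading i ⟨x, hx⟩).symm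
  simp only [parityProj, LinearMap.comp_apply, LinearEquiv.coe_coe, h, DirectSum.toModule_lof]
  split_ifs <;> simp

/-- The graded antisymmetrization of `m_n`. The Koszul sign only makes sense on homogeneous
elements and depends only on the parities of their degrees, so every argument is first split
into its even and odd part. -/
noncomputable def antisymOp (n : ℕ) : MultilinearMap k (fun _ : Fin n => C) C :=
  ∑ ε : Fin n → ZMod 2, ∑ σ : Equiv.Perm (Fin n),
    ((gSign (fun i => ((ε i).val : ℤ)) σ : ℤˣ) : ℤ) •
      ((𝒞.op n).domDomCongr σ).compLinearMap (fun i => 𝒞.parityProj (ε i))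

lemma antisymOp_apply {n : ℕ} {δ : Fin n → ℤ} {x : Fin n → C}
    (hx : ∀ i, x i ∈ 𝒞.grading (δ i)) :
    𝒞.antisymOp n x = ∑ σ : Equiv.Perm (Fin n), gSign δ σ • 𝒞.op n (fun i => x (σ i)) := by
  simp only [antisymOp, sum_apply, smul_apply,
    MultilinearMap.compLinearMap_apply, MultilinearMap.domDomCongr_apply]
  rw [Finset.sum_eq_single (fun i => (δ i : ZMod 2))]
  · refine Finset.sum_congr rfl fun σ _ => ?_
    rw [gSign_congr (δ' := δ) (fun i => by simp), Units.smul_def]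
    congr 2
    funext i
    rw [𝒞.parityProj_of_mem _ (hx _), if_pos rfl]
  · intro ε _ hε
    obtain ⟨i, hi⟩ := Function.ne_iff.1 hε
    refine Finset.sum_eq_zero fun σ _ => ?_
    rw [(𝒞.op n).map_coord_zero (σ⁻¹ i), smul_zero]
    rw [𝒞.parityProj_of_mem _ (hx _), if_neg]
    simpa using hi.symm
  · simp

lemma op_mem {n : ℕ} (hn : 1 ≤ n) {δ : Fin n → ℤ} {x : Fin n → C}
    (hx : ∀ i, x i ∈ 𝒞.grading (δ i)) : 𝒞.op n x ∈ 𝒞.grading ((∑ i, δ i) + n - 2) := by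
  obtain rfl | hn := hn.eq_or_lt
  · rw [𝒞.op_one]
    convert 𝒞.d_degree _ _ (hx 0) using 2
    simp
    ring
  · exact 𝒞.op_degree n hn δ x hx

lemma op_perm_mem {n : ℕ} (hn : 1 ≤ n) {δ : Fin n → ℤ} {x : Fin n → C}
    (hx : ∀ i, x i ∈ 𝒞.grading (δ i)) (σ : Equiv.Perm (Fin n)) :
    𝒞.op n (fun i => x (σ i)) ∈ 𝒞.grading ((∑ i, δ i) + n - 2) := by
  have := 𝒞.op_mem hn (fun i => hx (σ i))
  rwa [Equiv.sum_comp σ δ] at this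

lemma antisymOp_mem {n : ℕ} (hn : 1 ≤ n) {δ : Fin n → ℤ} {x : Fin n → C}
    (hx : ∀ i, x i ∈ 𝒞.grading (δ i)) :
    𝒞.antisymOp n x ∈ 𝒞.grading ((∑ i, δ i) + n - 2) := by
  rw [𝒞.antisymOp_apply hx]
  refine Submodule.sum_mem _ fun σ _ => ?_
  rw [Units.smul_def]
  exact zsmul_mem (𝒞.op_perm_mem hn hx σ) _

/-- In arity one the antisymmetrization changes nothing; by linearity this is checked on
homogeneous elements. -/
lemma antisymOp_one (x : Fin 1 → C) : 𝒞.antisymOp 1 x = 𝒞.d (x 0) := by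
  have hupd : ∀ c : C, Function.update (0 : Fin 1 → C) 0 c = fun _ => c := by
    intro c; funext i; rw [Subsingleton.elim i 0]; simp
  have key : (𝒞.antisymOp 1).toLinearMap 0 0 = 𝒞.d := by
    ext c
    have hc : c ∈ ⨆ i, 𝒞.grading i := by
      rw [𝒞.internal.submodule_iSup_eq_top]; trivial
    induction hc using Submodule.iSup_induction' with
    | mem i c hc =>
      rw [MultilinearMap.toLinearMap_apply, hupd,
        𝒞.antisymOp_apply (δ := fun _ => i) (fun _ => hc)]
      simp [gSign, 𝒞.op_one]
    | zero => simp
    | add a b _ _ ha hb => rw [map_add, map_add, ha, hb]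
  have := congrArg (fun f => f (x 0)) key
  simp only [MultilinearMap.toLinearMap_apply, hupd] at this
  rw [← this]
  congr 1
  funext i
  rw [Subsingleton.elim i 0]

lemma antisymOp_perm {n : ℕ} {δ : Fin n → ℤ} {x : Fin n → C}
    (hx : ∀ i, x i ∈ 𝒞.grading (δ i)) (τ : Equiv.Perm (Fin n)) :
    𝒞.antisymOp n (fun i => x (τ i)) = gSign δ τ • 𝒞.antisymOp n x := by
  rw [𝒞.antisymOp_apply hx, 𝒞.antisymOp_apply (fun i => hx (τ i)), Finset.smul_sum,
    ← Equiv.sum_comp (Equiv.mulLeft τ) (fun σ => gSign δ τ • gSign δ σ • _)]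
  refine Finset.sum_congr rfl fun σ _ => ?_
  rw [Equiv.coe_mulLeft, gSign_mul, smul_smul, ← mul_assoc, Int.units_mul_self, one_mul]
  rfl

/-! ### Jacobi identities from Stasheff relations -/

lemma op_congr {a b : ℕ} (h : a = b) {f : Fin a → C} {g : Fin b → C}
    (hfg : ∀ (i : ℕ) (ha : i < a) (hb : i < b), f ⟨i, ha⟩ = g ⟨i, hb⟩) :
    𝒞.op a f = 𝒞.op b g := by
  subst h
  congr 1
  funext i
  exact hfg i i.2 i.2

/-- The `(r, q)` summand of the Stasheff relation on `x₀ ⊗ ⋯ ⊗ x_{n-1}`. -/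
noncomputable def stasheffTerm {n : ℕ} (δ : Fin n → ℤ) (x : Fin n → C) (r q : ℕ) : C :=
  (((-1 : ℤˣ) ^ (r + q * (n - r - q))) *
      ((-1 : ℤˣ) ^ (((q : ℤ) - 2) * ∑ m ∈ Finset.range r, extendByZero δ m))) •
    𝒞.op (r + 1 + (n - r - q)) (fun j =>
      if (j : ℕ) < r then extendByZero x (j : ℕ)
      else if (j : ℕ) = r then
        𝒞.op q (fun i => extendByZero x (r + (i : ℕ)))
      else extendByZero x (q + (j : ℕ) - 1))

/-- Up to reordering the inputs by `blockMove`, the Stasheff summand applies `m_{t+1}` to the list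
obtained from the last `t` inputs by inserting `m_q` of the first `q` inputs in position `r`. -/
lemma op_blockMove {q t : ℕ} (x : Fin (q + t) → C) (r : Fin (t + 1)) (γ : Equiv.Perm (Fin t))
    (z : Fin t → C) (hz : ∀ j, z (γ j) = x (Fin.natAdd q j)) :
    𝒞.op (r + 1 + (q + t - r - q)) (fun j =>
      if (j : ℕ) < r then
        extendByZero (fun i => x (blockMove q r (Nat.le_of_lt_succ r.isLt) i)) (j : ℕ)
      else if (j : ℕ) = r then
        𝒞.op q (fun i => extendByZero
          (fun i => x (blockMove q r (Nat.le_of_lt_succ r.isLt) i)) (r + (i : ℕ)))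
      else extendByZero (fun i => x (blockMove q r (Nat.le_of_lt_succ r.isLt) i))
        (q + (j : ℕ) - 1)) =
    𝒞.op (t + 1) (fun i => (Fin.cons (𝒞.op q (fun i => x (Fin.castAdd t i))) z :
      Fin (t + 1) → C) (insertZero r γ i)) := by
  have hr := r.isLt
  refine 𝒞.op_congr (by omega) fun i ha hb => ?_
  dsimp only
  rcases lt_trichotomy i (r : ℕ) with h | h | h
  · have e : (⟨i, hb⟩ : Fin (t + 1)) = r.succAbove ⟨i, by omega⟩ := by
      rw [Fin.succAbove_of_castSucc_lt _ _ (by simpa [Fin.lt_def])]; rfl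
    rw [if_pos h, e, insertZero_succAbove, Fin.cons_succ, hz, extendByZero,
      dif_pos (by omega)]
    congr 1
    ext
    simp [blockMove_val, h]
  · have e : (⟨i, hb⟩ : Fin (t + 1)) = r := Fin.ext h
    rw [if_neg (by omega), if_pos h, e, insertZero_self, Fin.cons_zero]
    congr 1
    funext j
    have := j.isLt
    rw [extendByZero, dif_pos (by omega)]
    congr 1
    ext
    simp [blockMove_val]
  · have e : (⟨i, hb⟩ : Fin (t + 1)) = r.succAbove ⟨i - 1, by omega⟩ := by
      rw [Fin.succAbove_of_le_castSucc _ _ (by simp [Fin.le_def]; omega)]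
      ext; simp; omega
    rw [if_neg (by omega), if_neg (by omega), e, insertZero_succAbove, Fin.cons_succ, hz,
      extendByZero, dif_pos (by omega)]
    congr 1
    ext
    simp only [blockMove_val, Fin.val_natAdd]
    split_ifs <;> omega

lemma prod_ite_lt_const {t : ℕ} (r : Fin (t + 1)) (c : ℤˣ) :
    (∏ u : Fin t, if (u : ℕ) < r then c else 1) = c ^ (r : ℕ) := by
  rw [Fin.prod_univ_eq_prod_range (fun u => if u < (r : ℕ) then c else 1) t,
    ← Finset.prod_filter]
  have : (Finset.range t).filter (fun u => u < (r : ℕ)) = Finset.range r := by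
    have := r.isLt
    ext u; simp; omega
  rw [this, Finset.prod_const, Finset.card_range]

/-- The sign bookkeeping behind the theorem, in terms of the total degree `B` of the inputs of the
inner operation and the degrees `d` of the remaining inputs. -/
lemma sign_identity {t : ℕ} (q : ℕ) (r : Fin (t + 1)) (d : Fin t → ℤ) (B : ℤ) :
    (-1 : ℤˣ) ^ (q * t) *
        ∏ u : Fin t, (if (u : ℕ) < r then (-1 : ℤˣ) ^ (1 + d u * (B + q - 2)) else 1) =
      (∏ u : Fin t, if (u : ℕ) < r then (-1 : ℤˣ) ^ (q + d u * B) else 1) *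
        ((-1 : ℤˣ) ^ ((r : ℕ) + q * (t - r)) *
          ∏ u : Fin t, if (u : ℕ) < r then (-1 : ℤˣ) ^ (((q : ℤ) - 2) * d u) else 1) := by
  have hr : q * t = q * r + q * (t - r) := by
    rw [← mul_add, Nat.add_sub_cancel' (Nat.le_of_lt_succ r.isLt)]
  have h1 : ∏ u : Fin t, (if (u : ℕ) < r then (-1 : ℤˣ) ^ (1 + d u * (B + q - 2)) else 1) =
      (-1 : ℤˣ) ^ (r : ℕ) * ∏ u : Fin t,
        (if (u : ℕ) < r then (-1 : ℤˣ) ^ (d u * B) * (-1 : ℤˣ) ^ (((q : ℤ) - 2) * d u) else 1) := by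
    rw [← prod_ite_lt_const, ← Finset.prod_mul_distrib]
    refine Finset.prod_congr rfl fun u _ => ?_
    split_ifs
    · rw [← zpow_add, zpow_add, zpow_one]; congr 2; ring
    · simp
  have h2 : ∏ u : Fin t, (if (u : ℕ) < r then (-1 : ℤˣ) ^ (q + d u * B) else 1) =
      (-1 : ℤˣ) ^ (q * (r : ℕ)) * ∏ u : Fin t,
        (if (u : ℕ) < r then (-1 : ℤˣ) ^ (d u * B) else 1) := by
    rw [pow_mul, ← prod_ite_lt_const, ← Finset.prod_mul_distrib]
    refine Finset.prod_congr rfl fun u _ => ?_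
    split_ifs
    · rw [zpow_add, zpow_natCast]
    · simp
  have h3 : ∏ u : Fin t,
      (if (u : ℕ) < r then (-1 : ℤˣ) ^ (d u * B) * (-1 : ℤˣ) ^ (((q : ℤ) - 2) * d u) else 1) =
      (∏ u : Fin t, if (u : ℕ) < r then (-1 : ℤˣ) ^ (d u * B) else 1) *
      ∏ u : Fin t, if (u : ℕ) < r then (-1 : ℤˣ) ^ (((q : ℤ) - 2) * d u) else 1 := by
    rw [← Finset.prod_mul_distrib]
    refine Finset.prod_congr rfl fun u _ => ?_
    split_ifs <;> simp
  rw [h1, h2, h3, hr, pow_add, pow_add]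
  generalize (∏ u : Fin t, if (u : ℕ) < r then (-1 : ℤˣ) ^ (d u * B) else 1) = X,
    (∏ u : Fin t, if (u : ℕ) < r then (-1 : ℤˣ) ^ (((q : ℤ) - 2) * d u) else 1) = Y,
    (-1 : ℤˣ) ^ (q * (r : ℕ)) = Z, (-1 : ℤˣ) ^ (q * (t - (r : ℕ))) = W
  ac_rfl

lemma sum_extendByZero_blockMove {q t : ℕ} (δ : Fin (q + t) → ℤ) (r : ℕ) (hr : r ≤ t) (c : ℤ) :
    (-1 : ℤˣ) ^ (c * ∑ m ∈ Finset.range r, extendByZero (fun i => δ (blockMove q r hr i)) m) =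
      ∏ u : Fin t, if (u : ℕ) < r then (-1 : ℤˣ) ^ (c * δ (Fin.natAdd q u)) else 1 := by
  have h : ∀ u : Fin t, (if (u : ℕ) < r then (-1 : ℤˣ) ^ (c * δ (Fin.natAdd q u)) else 1) =
      (fun m => if m < r then (-1 : ℤˣ) ^
        (c * extendByZero (fun i => δ (blockMove q r hr i)) m) else 1) (u : ℕ) := by
    intro u
    dsimp only
    split_ifs with hu
    · have hlt := u.isLt
      rw [extendByZero, dif_pos (by omega)]
      congr 3
      ext
      simp [blockMove_val, hu]
    · rfl
  rw [Finset.prod_congr rfl fun u _ => h u, Fin.prod_univ_eq_prod_range (fun m => if m < r then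
      (-1 : ℤˣ) ^ (c * extendByZero (fun i => δ (blockMove q r hr i)) m) else 1) t,
    ← Finset.prod_filter, Finset.mul_sum, negOne_zpow_sum]
  congr 1
  ext m; simp; omega

/-- A summand of the expanded nested bracket is a Stasheff summand on the permuted inputs. -/
lemma nested_term {q t : ℕ} (δ : Fin (q + t) → ℤ) (x : Fin (q + t) → C)
    (σ : Equiv.Perm (Fin (q + t))) (α : Equiv.Perm (Fin q)) (γ : Equiv.Perm (Fin t))
    (r : Fin (t + 1)) (ρ : Equiv.Perm (Fin (q + t)))
    (hρ : ρ = σ * blockSum α γ * blockMove q r (Nat.le_of_lt_succ r.isLt)) :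
    ((-1 : ℤˣ) ^ (q * t) * gSign δ σ) • gSign (fun i => δ (σ (Fin.castAdd t i))) α •
      gSign (Fin.cons ((∑ v : Fin q, δ (σ (Fin.castAdd t v))) + q - 2)
        (fun j => δ (σ (Fin.natAdd q j))) : Fin (t + 1) → ℤ) (insertZero r γ) •
      𝒞.op (t + 1) (fun i => (Fin.cons (𝒞.op q (fun i => x (σ (Fin.castAdd t (α i)))))
        (fun j => x (σ (Fin.natAdd q j))) : Fin (t + 1) → C) (insertZero r γ i)) =
    gSign δ ρ • 𝒞.stasheffTerm (fun i => δ (ρ i)) (fun i => x (ρ i)) r q := by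
  have hr := Nat.le_of_lt_succ r.isLt
  have hop := 𝒞.op_blockMove (fun i => x ((σ * blockSum α γ) i)) r γ
    (fun j => x (σ (Fin.natAdd q j))) (fun j => by simp)
  simp only [Equiv.Perm.mul_apply, blockSum_castAdd] at hop
  have hB : ∑ v : Fin q, δ (σ (Fin.castAdd t (α v))) = ∑ v : Fin q, δ (σ (Fin.castAdd t v)) :=
    Equiv.sum_comp α (fun v => δ (σ (Fin.castAdd t v)))
  have hsum := sum_extendByZero_blockMove (fun i => δ ((σ * blockSum α γ) i)) r hr ((q : ℤ) - 2)
  have hsub : q + t - r - q = t - r := by omega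
  have hid := sign_identity q r (fun u => δ (σ (Fin.natAdd q (γ u))))
    (∑ v : Fin q, δ (σ (Fin.castAdd t v)))
  simp only [Equiv.Perm.mul_apply, blockSum_natAdd] at hsum
  subst hρ
  rw [stasheffTerm]
  simp only [Equiv.Perm.mul_apply]
  rw [hop, hsum, hsub]
  simp only [smul_smul]
  congr 1
  rw [gSign_mul, gSign_mul, gSign_blockSum, gSign_blockMove, gSign_insertZero]
  simp only [Equiv.Perm.mul_apply, blockSum_castAdd, blockSum_natAdd, hB, Fin.cons_succ,
    Fin.cons_zero]
  rw [mul_assoc (gSign δ σ * _), ← hid]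
  generalize (-1 : ℤˣ) ^ (q * t) = Y, gSign δ σ = Z,
    gSign (fun i => δ (σ (Fin.castAdd t i))) α = W,
    gSign (fun i => δ (σ (Fin.natAdd q i))) γ = V
  ac_rfl

/-- Expansion of the nested bracket `ℓ_{t+1}(ℓ_q(…), …)` into Stasheff summands. -/
lemma nested_expand {q t : ℕ} (hq : 1 ≤ q) {δ : Fin (q + t) → ℤ} {x : Fin (q + t) → C}
    (hx : ∀ i, x i ∈ 𝒞.grading (δ i)) (σ : Equiv.Perm (Fin (q + t)))
    (S : ℕ → Equiv.Perm (Fin (q + t)) → C)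
    (hS : ∀ (r : ℕ) ρ, S r ρ =
      gSign δ ρ • 𝒞.stasheffTerm (fun i => δ (ρ i)) (fun i => x (ρ i)) r q) :
    ((-1 : ℤˣ) ^ (q * t) * gSign δ σ) • 𝒞.antisymOp (t + 1)
      (Fin.cons (𝒞.antisymOp q (fun i => x (σ (Fin.castAdd t i))))
        (fun j => x (σ (Fin.natAdd q j)))) =
    ∑ α, ∑ γ, ∑ r : Fin (t + 1),
      S r (σ * blockSum α γ * blockMove q r (Nat.le_of_lt_succ r.isLt)) := by
  have hlin : ∀ w : C, 𝒞.antisymOp (t + 1) (Fin.cons w (fun j => x (σ (Fin.natAdd q j)))) =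
      (𝒞.antisymOp (t + 1)).toLinearMap (Fin.cons 0 (fun j => x (σ (Fin.natAdd q j)))) 0 w := by
    intro w
    rw [MultilinearMap.toLinearMap_apply, Fin.update_cons_zero]
  rw [hlin, 𝒞.antisymOp_apply (fun i => hx (σ (Fin.castAdd t i))), map_sum, Finset.smul_sum]
  refine Finset.sum_congr rfl fun α _ => ?_
  rw [Units.smul_def (gSign _ α), map_zsmul, ← Units.smul_def, ← hlin,
    𝒞.antisymOp_apply (δ := Fin.cons ((∑ v : Fin q, δ (σ (Fin.castAdd t v))) + q - 2)
        (fun j => δ (σ (Fin.natAdd q j)))), sum_insertZero, Finset.sum_comm, Finset.smul_sum,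
    Finset.smul_sum]
  · refine Finset.sum_congr rfl fun γ _ => ?_
    rw [Finset.smul_sum, Finset.smul_sum]
    refine Finset.sum_congr rfl fun r _ => ?_
    rw [hS]
    exact 𝒞.nested_term δ x σ α γ r _ rfl
  · intro i
    refine Fin.cases ?_ (fun j => ?_) i
    · exact 𝒞.op_perm_mem hq (fun i => hx (σ (Fin.castAdd t i))) α
    · exact hx _

/-- The `q`-th part of the Jacobi sum, as a sum over all orderings of the inputs. -/
lemma sum_nested {n q t : ℕ} (hq : 1 ≤ q) (h : q + t = n) {δ : Fin n → ℤ} {x : Fin n → C}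
    (hx : ∀ i, x i ∈ 𝒞.grading (δ i)) :
    ∑ σ ∈ Finset.univ.filter (fun σ : Equiv.Perm (Fin n) => IsUnshuffle q σ),
      ((-1 : ℤˣ) ^ (q * t) * gSign δ σ) • 𝒞.antisymOp (t + 1)
        (Fin.cons (𝒞.antisymOp q (fun i => x (σ (Fin.castLE (h ▸ Nat.le_add_right q t) i))))
          (fun j => x (σ (Fin.cast h (Fin.natAdd q j))))) =
    ∑ r ∈ Finset.range (t + 1), ∑ ρ : Equiv.Perm (Fin n),
      gSign δ ρ • 𝒞.stasheffTerm (fun i => δ (ρ i)) (fun i => x (ρ i)) r q := by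
  subst h
  obtain ⟨S, hS⟩ : ∃ S : ℕ → Equiv.Perm (Fin (q + t)) → C, ∀ (r : ℕ) ρ, S r ρ =
    gSign δ ρ • 𝒞.stasheffTerm (fun i => δ (ρ i)) (fun i => x (ρ i)) r q := ⟨_, fun _ _ => rfl⟩
  simp only [← hS]
  refine (Finset.sum_congr rfl fun σ _ => 𝒞.nested_expand hq hx σ S hS).trans ?_
  rw [sum_unshuffle (fun ρ => ∑ r : Fin (t + 1),
      S r (ρ * blockMove q r (Nat.le_of_lt_succ r.isLt))), Finset.sum_comm,
    ← Fin.sum_univ_eq_sum_range (fun r => ∑ ρ, S r ρ)]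
  refine Finset.sum_congr rfl fun r _ => ?_
  exact Equiv.sum_comp (Equiv.mulRight (blockMove q r (Nat.le_of_lt_succ r.isLt))) (S r)

/-- Collecting the parts for all `q` gives, for each ordering of the inputs, a full Stasheff
relation. -/
lemma antisymOp_jacobi {n : ℕ} (hn : 1 ≤ n) {δ : Fin n → ℤ} {x : Fin n → C}
    (hx : ∀ i, x i ∈ 𝒞.grading (δ i)) :
    ∑ q' : Fin n, ∑ σ ∈ Finset.univ.filter
        (fun σ : Equiv.Perm (Fin n) => IsUnshuffle ((q' : ℕ) + 1) σ),
      (((-1 : ℤˣ) ^ (((q' : ℕ) + 1) * (n - ((q' : ℕ) + 1))) *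
          Equiv.Perm.sign σ * koszulSign δ σ)) •
        𝒞.antisymOp (n - ((q' : ℕ) + 1) + 1)
          (Fin.cases
            (𝒞.antisymOp ((q' : ℕ) + 1) (fun i => x (σ (Fin.castLE q'.isLt i))))
            (fun j => x (σ (Fin.cast (Nat.add_sub_cancel' q'.isLt)
              (Fin.natAdd ((q' : ℕ) + 1) j)))))
      = 0 := by
  have h1 : ∀ q' : Fin n, _ := fun q' => 𝒞.sum_nested (q := (q' : ℕ) + 1)
    (t := n - ((q' : ℕ) + 1)) (Nat.le_add_left 1 _) (Nat.add_sub_cancel' q'.isLt) hx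
  simp only [mul_assoc, sign_mul_koszulSign]
  refine (Finset.sum_congr rfl fun q' _ => h1 q').trans ?_
  obtain ⟨T, hT⟩ : ∃ T : ℕ → ℕ → Equiv.Perm (Fin n) → C, ∀ r q ρ, T r q ρ =
    gSign δ ρ • 𝒞.stasheffTerm (fun i => δ (ρ i)) (fun i => x (ρ i)) r q := ⟨_, fun _ _ _ => rfl⟩
  simp only [← hT]
  rw [Fin.sum_univ_eq_sum_range
    (fun q' => ∑ r ∈ Finset.range (n - (q' + 1) + 1), ∑ ρ, T r (q' + 1) ρ) n]
  have h2 : ∑ q' ∈ Finset.range n, ∑ r ∈ Finset.range (n - (q' + 1) + 1), ∑ ρ, T r (q' + 1) ρ =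
      ∑ q ∈ Finset.Icc 1 n, ∑ r ∈ Finset.range (n - q + 1), ∑ ρ, T r q ρ := by
    refine Finset.sum_nbij' (· + 1) (· - 1) ?_ ?_ ?_ ?_ ?_
    · intro a ha; simp at ha ⊢; omega
    · intro a ha; simp at ha ⊢; omega
    · intro a ha; simp
    · intro a ha; simp at ha ⊢; omega
    · intro a ha; rfl
  have h3 : ∑ q ∈ Finset.Icc 1 n, ∑ r ∈ Finset.range (n - q + 1), ∑ ρ, T r q ρ =
      ∑ r ∈ Finset.range (n + 1), ∑ q ∈ Finset.Icc 1 (n - r), ∑ ρ, T r q ρ := by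
    refine Finset.sum_comm' fun q r => ?_
    simp only [Finset.mem_Icc, Finset.mem_range]
    omega
  rw [h2, h3, Finset.sum_congr rfl (fun r _ => Finset.sum_comm), Finset.sum_comm]
  refine Finset.sum_eq_zero fun ρ _ => ?_
  simp only [hT, ← Finset.smul_sum]
  have h4 := 𝒞.stasheff n hn (fun i => δ (ρ i)) (fun i => x (ρ i)) (fun i => hx (ρ i))
  exact (congrArg (gSign δ ρ • ·) h4).trans (smul_zero _)

end AInftyStr

/-- Let `k` be a field of characteristic 0 and `(C, d, m_n)` an A∞-algebra over `k`.  Then `C`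
with the same differential and the antisymmetrized operations
`ℓ_n (c₁,…,cₙ) = ∑_{σ ∈ S_n} sgn(σ) (-1)^{ε(σ)} m_n (c_{σ⁻¹(1)}, …, c_{σ⁻¹(n)})`
is an L∞-algebra. -/
theorem aInfty_antisymmetrization_isLInfty
    (k C : Type*) [Field k] [CharZero k] [AddCommGroup C] [Module k C]
    (𝒞 : AInftyStr k C) :
    ∃ L : LInftyStr k C,
      L.grading = 𝒞.grading ∧
      L.d = 𝒞.d ∧
      (∀ (n : ℕ), 2 ≤ n → ∀ (δ : Fin n → ℤ) (x : Fin n → C),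
        (∀ i, x i ∈ 𝒞.grading (δ i)) →
        L.op n x = ∑ σ : Equiv.Perm (Fin n),
          (Equiv.Perm.sign σ * koszulSign δ σ⁻¹) •
            𝒞.op n (fun i => x (σ⁻¹ i))) := by
  refine ⟨{
    grading := 𝒞.grading
    internal := 𝒞.internal
    d := 𝒞.d
    d_degree := 𝒞.d_degree
    d_sq := 𝒞.d_sq
    op := 𝒞.antisymOp
    op_one := 𝒞.antisymOp_one
    op_degree := fun n hn δ x hx => 𝒞.antisymOp_mem (by omega) hx
    antisymm := fun n _ δ x hx σ => by
      rw [sign_mul_koszulSign]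
      exact 𝒞.antisymOp_perm hx σ
    jacobi := fun n hn δ x hx => 𝒞.antisymOp_jacobi hn hx }, rfl, rfl, ?_⟩
  intro n _ δ x hx
  rw [𝒞.antisymOp_apply hx, ← Equiv.sum_comp (Equiv.inv (Equiv.Perm (Fin n)))]
  refine Finset.sum_congr rfl fun σ _ => ?_
  rw [← sign_mul_koszulSign]
  simp
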